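/- arXiv:2007.10664 — 6 statements merged into one kernel-verified Lean document; each statement's English description precedes it below -/
import Mathlib

section
/- The following two suprema coincide: sSup { ∑ᵢ ω i ⟪xᵢ, y⟫ : x : ι → H with xᵢ ∈ Mᵢ for all i, ∑ᵢ ω i ‖xᵢ‖² ≤ 1, the (absolutely convergent) series ∑ᵢ ω i • xᵢ lies in M^⊥, and y ∈ M^⊥ with ‖y‖ ≤ 1 } = sSup { ∑ᵢ ω i ⟪xᵢ, y⟫ : x : ι → H with xᵢ ∈ Mᵢ ∩ M^⊥ for all i and ∑ᵢ ω i ‖xᵢ‖² ≤ 1, and y ∈ M^⊥ with ‖y‖ ≤ 1 }. (The left-hand supremum is the cosine of the Friedrichs angle between the product subspace C_ω = ∏ᵢ Mᵢ and the diagonal D_ω in the ω-weighted ℓ² product space over H.) -/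
open RealInnerProductSpace

/-!
Let `K = ⨅ j, M j`. Since `K ≤ M i`, projecting `x i` onto `Kᗮ` subtracts a vector of `M i` and so
stays in `M i`; it does not increase `‖x i‖`, and it does not change the pairing of `x i` with a
vector of `Kᗮ`. Hence every value on the left is attained on the right. Conversely, a weighted
square-summable family in `Kᗮ` has a convergent weighted sum, which lies in the closed subspace
`Kᗮ`. So already the two sets of values coincide.
-/

theorem completeSpace_iInf_submodule {R E ι : Type*} [Semiring R] [AddCommMonoid E] [Module R E]
    [UniformSpace E] [T0Space E] [Nonempty ι] (M : ι → Submodule R E)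
    [∀ i, CompleteSpace (M i)] : CompleteSpace (⨅ i, M i : Submodule R E) := by
  have isComplete (i : ι) : IsComplete (M i : Set E) :=
    completeSpace_coe_iff_isComplete.mp inferInstance
  have isClosed_iInf : IsClosed ((⨅ i, M i : Submodule R E) : Set E) := by
    rw [Submodule.coe_iInf]
    exact isClosed_iInter fun i => (isComplete i).isClosed
  obtain ⟨i⟩ := ‹Nonempty ι›
  refine completeSpace_coe_iff_isComplete.mpr fun f hf hf_le => ?_
  obtain ⟨x, -, hfx⟩ := isComplete i f hf (hf_le.trans (Filter.principal_mono.mpr (iInf_le M i)))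
  have : f.NeBot := hf.1
  exact ⟨x, isClosed_iff_clusterPt.mp isClosed_iInf x ((ClusterPt.of_le_nhds hfx).mono hf_le), hfx⟩

section Projection

variable {𝕜 E : Type*} [RCLike 𝕜] [NormedAddCommGroup E] [InnerProductSpace 𝕜 E]
  {K : Submodule 𝕜 E} [K.HasOrthogonalProjection]

theorem starProjection_orthogonal_mem_of_le {M : Submodule 𝕜 E} (hKM : K ≤ M) {x : E}
    (hx : x ∈ M) : Kᗮ.starProjection x ∈ M := by
  rw [Submodule.starProjection_orthogonal_val]
  exact M.sub_mem hx (hKM (K.starProjection_apply_mem x))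

theorem inner_starProjection_left_of_mem (x : E) {y : E} (hy : y ∈ K) :
    inner 𝕜 (K.starProjection x) y = inner 𝕜 x y := by
  rw [Submodule.inner_starProjection_left_eq_right, Submodule.starProjection_eq_self_iff.mpr hy]

end Projection

theorem summable_smul_of_summable_mul_norm_sq {E ι : Type*} [NormedAddCommGroup E]
    [NormedSpace ℝ E] [CompleteSpace E] {ω : ι → ℝ} {x : ι → E} (hω : ∀ i, 0 ≤ ω i)
    (hωsum : Summable ω) (hx : Summable fun i => ω i * ‖x i‖ ^ 2) :
    Summable fun i => ω i • x i := by
  refine Summable.of_norm_bounded (hωsum.add hx) fun i => ?_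
  have norm_le_one_add_sq : ‖x i‖ ≤ 1 + ‖x i‖ ^ 2 := by nlinarith [sq_nonneg (‖x i‖ - 1)]
  calc ‖ω i • x i‖ = ω i * ‖x i‖ := by rw [norm_smul, Real.norm_of_nonneg (hω i)]
    _ ≤ ω i * (1 + ‖x i‖ ^ 2) := mul_le_mul_of_nonneg_left norm_le_one_add_sq (hω i)
    _ = ω i + ω i * ‖x i‖ ^ 2 := by ring

theorem stmt_4_general {H ι : Type*} [NormedAddCommGroup H] [InnerProductSpace ℝ H]
    [CompleteSpace H] (ω : ι → ℝ) (hω : ∀ i, 0 ≤ ω i) (hωsum : Summable ω)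
    (M : ι → Submodule ℝ H) (K : Submodule ℝ H) [K.HasOrthogonalProjection]
    (hKM : ∀ i, K ≤ M i) :
    { r : ℝ | ∃ (x : ι → H) (y : H),
      (∀ i, x i ∈ M i) ∧
      (Summable fun i => ω i * ‖x i‖ ^ 2) ∧ (∑' i, ω i * ‖x i‖ ^ 2) ≤ 1 ∧
      (Summable fun i => ω i • x i) ∧ (∑' i, ω i • x i) ∈ Kᗮ ∧
      y ∈ Kᗮ ∧ ‖y‖ ≤ 1 ∧
      r = ∑' i, ω i * ⟪x i, y⟫ } =
    { r : ℝ | ∃ (x : ι → H) (y : H),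
      (∀ i, x i ∈ M i ⊓ Kᗮ) ∧
      (Summable fun i => ω i * ‖x i‖ ^ 2) ∧ (∑' i, ω i * ‖x i‖ ^ 2) ≤ 1 ∧
      y ∈ Kᗮ ∧ ‖y‖ ≤ 1 ∧
      r = ∑' i, ω i * ⟪x i, y⟫ } := by
  apply Set.Subset.antisymm
  · rintro _ ⟨x, y, hxM, hx, hx_le, -, -, hyK, hy_le, rfl⟩
    have weighted_norm_le (i : ι) :
        ω i * ‖Kᗮ.starProjection (x i)‖ ^ 2 ≤ ω i * ‖x i‖ ^ 2 :=
      mul_le_mul_of_nonneg_left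
        (pow_le_pow_left₀ (norm_nonneg _) (Kᗮ.norm_starProjection_apply_le (x i)) 2) (hω i)
    have summable_proj : Summable fun i => ω i * ‖Kᗮ.starProjection (x i)‖ ^ 2 :=
      hx.of_nonneg_of_le (fun i => mul_nonneg (hω i) (sq_nonneg _)) weighted_norm_le
    refine ⟨fun i => Kᗮ.starProjection (x i), y, fun i => ⟨?_, Kᗮ.starProjection_apply_mem _⟩,
      summable_proj, (summable_proj.tsum_le_tsum weighted_norm_le hx).trans hx_le, hyK, hy_le, ?_⟩
    · exact starProjection_orthogonal_mem_of_le (hKM i) (hxM i)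
    · simp only [inner_starProjection_left_of_mem _ hyK]
  · rintro _ ⟨x, y, hxMK, hx, hx_le, hyK, hy_le, rfl⟩
    exact ⟨x, y, fun i => (hxMK i).1, hx, hx_le,
      summable_smul_of_summable_mul_norm_sq hω hωsum hx,
      tsum_mem K.isClosed_orthogonal fun i => Kᗮ.smul_mem _ (hxMK i).2, hyK, hy_le, rfl⟩

/-- The supremum defining the cosine of the Friedrichs angle between
the product space `∏ᵢ Mᵢ` and the diagonal (left-hand side) equals the supremum
taken over families with components in `Mᵢ ∩ M^⊥` (right-hand side). -/
theorem stmt_4 {H : Type*} [NormedAddCommGroup H] [InnerProductSpace ℝ H] [CompleteSpace H]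
    {ι : Type*} [Countable ι] [Nonempty ι]
    (ω : ι → ℝ) (hω : ∀ i, 0 < ω i) (hωsum : HasSum ω 1)
    (M : ι → Submodule ℝ H) [∀ i, CompleteSpace (M i)]
    (hMnt : ∀ i, M i ≠ ⊥) :
    sSup { r : ℝ | ∃ (x : ι → H) (y : H),
      (∀ i, x i ∈ M i) ∧
      (Summable fun i => ω i * ‖x i‖ ^ 2) ∧ (∑' i, ω i * ‖x i‖ ^ 2) ≤ 1 ∧
      (Summable fun i => ω i • x i) ∧ (∑' i, ω i • x i) ∈ (⨅ j, M j : Submodule ℝ H)ᗮ ∧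
      y ∈ (⨅ j, M j : Submodule ℝ H)ᗮ ∧ ‖y‖ ≤ 1 ∧
      r = ∑' i, ω i * ⟪x i, y⟫ } =
    sSup { r : ℝ | ∃ (x : ι → H) (y : H),
      (∀ i, x i ∈ M i ⊓ (⨅ j, M j : Submodule ℝ H)ᗮ) ∧
      (Summable fun i => ω i * ‖x i‖ ^ 2) ∧ (∑' i, ω i * ‖x i‖ ^ 2) ≤ 1 ∧
      y ∈ (⨅ j, M j : Submodule ℝ H)ᗮ ∧ ‖y‖ ≤ 1 ∧
      r = ∑' i, ω i * ⟪x i, y⟫ } := by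
  have := completeSpace_iInf_submodule M
  exact congrArg sSup
    (stmt_4_general ω (fun i => (hω i).le) hωsum.summable M (⨅ j, M j) (iInf_le M))
end

section
/- The Friedrichs cosine c_ω and the configuration constant κ_ω satisfy the estimates c_ω² ≤ κ_ω ≤ c_ω. -/
open RealInnerProductSpace

/-- The cosine of the Friedrichs angle between the product subspace `∏ᵢ Mᵢ` and the
diagonal in the `ω`-weighted `ℓ²` product space, expressed intrinsically in `H`. -/
noncomputable def friedrichsCos {H : Type*} [NormedAddCommGroup H] [InnerProductSpace ℝ H]
    {ι : Type*} (ω : ι → ℝ) (M : ι → Submodule ℝ H) : ℝ :=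
  sSup { r : ℝ | ∃ (x : ι → H) (y : H),
    (∀ i, x i ∈ M i ⊓ (⨅ j, M j)ᗮ) ∧
    (Summable fun i => ω i * ‖x i‖ ^ 2) ∧ (∑' i, ω i * ‖x i‖ ^ 2) ≤ 1 ∧
    y ∈ (⨅ j, M j)ᗮ ∧ ‖y‖ ≤ 1 ∧
    r = ∑' i, ω i * ⟪x i, y⟫ }

/-- The configuration constant between the product subspace `∏ᵢ Mᵢ` and the diagonal
in the `ω`-weighted `ℓ²` product space, expressed intrinsically in `H`. -/
noncomputable def configConst {H : Type*} [NormedAddCommGroup H] [InnerProductSpace ℝ H]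
    {ι : Type*} (ω : ι → ℝ) (M : ι → Submodule ℝ H) : ℝ :=
  sSup { r : ℝ | ∃ (x : ι → H) (y : H),
    (∀ i, x i ∈ M i ⊓ (⨅ j, M j)ᗮ) ∧ (∀ i, ‖x i‖ ≤ 1) ∧
    y ∈ (⨅ j, M j)ᗮ ∧ ‖y‖ ≤ 1 ∧
    r = ∑' i, ω i * ⟪x i, y⟫ }

/-! A family with `‖xᵢ‖ ≤ 1` for all `i` has weighted `ℓ²` norm at most `1`, so the supremum
defining `κ_ω` is over a smaller set than the one defining `c_ω`. Conversely, replace each `xᵢ` by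
`uᵢ := ± xᵢ / ‖xᵢ‖` (by `0` if `xᵢ = 0`), with the sign that makes `⟪uᵢ, y⟫ ≥ 0`. Then
`|⟪xᵢ, y⟫| = ‖xᵢ‖ ⟪uᵢ, y⟫`, and the Cauchy–Schwarz inequality gives
`(∑ ωᵢ ⟪xᵢ, y⟫)² ≤ (∑ ωᵢ ‖xᵢ‖²) (∑ ωᵢ ⟪uᵢ, y⟫²) ≤ ∑ ωᵢ ⟪uᵢ, y⟫ ≤ κ_ω`,
where `⟪uᵢ, y⟫² ≤ ⟪uᵢ, y⟫` because `0 ≤ ⟪uᵢ, y⟫ ≤ 1`. -/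

section CauchySchwarz

variable {ι : Type*} {a f g : ι → ℝ}

theorem summable_of_sq_le_mul (hf : ∀ i, 0 ≤ f i) (hg : ∀ i, 0 ≤ g i)
    (hfs : Summable f) (hgs : Summable g) (ha : ∀ i, a i ^ 2 ≤ f i * g i) : Summable a := by
  refine Summable.of_norm_bounded (hfs.add hgs) fun i => ?_
  refine abs_le_of_sq_le_sq ?_ (add_nonneg (hf i) (hg i))
  nlinarith [ha i, mul_nonneg (hf i) (hg i), sq_nonneg (f i), sq_nonneg (g i)]

theorem tsum_sq_le_tsum_mul_tsum_of_sq_le_mul (hf : ∀ i, 0 ≤ f i) (hg : ∀ i, 0 ≤ g i)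
    (hfs : Summable f) (hgs : Summable g) (ha : ∀ i, a i ^ 2 ≤ f i * g i) :
    (∑' i, a i) ^ 2 ≤ (∑' i, f i) * ∑' i, g i :=
  le_of_tendsto_of_tendsto' ((summable_of_sq_le_mul hf hg hfs hgs ha).hasSum.pow 2)
    (Filter.Tendsto.mul hfs.hasSum hgs.hasSum) fun s =>
      s.sum_sq_le_sum_mul_sum_of_sq_le_mul (fun i _ => hf i) (fun i _ => hg i) fun i _ => ha i

end CauchySchwarz

section WeightedInner

variable {H : Type*} [NormedAddCommGroup H] [InnerProductSpace ℝ H] {ι : Type*} {ω : ι → ℝ}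

theorem exists_mem_norm_le_one_abs_inner_eq {K : Submodule ℝ H} {x : H} (hx : x ∈ K) (y : H) :
    ∃ u ∈ K, ‖u‖ ≤ 1 ∧ 0 ≤ ⟪u, y⟫ ∧ |⟪x, y⟫| = ‖x‖ * ⟪u, y⟫ := by
  wlog hxy : 0 ≤ ⟪x, y⟫ generalizing x
  · simpa using this (neg_mem hx) (by simpa using (not_le.mp hxy).le)
  refine ⟨NormedSpace.normalize x, K.smul_mem _ hx, ?_, ?_, ?_⟩
  · simpa [NormedSpace.normalize, norm_smul] using inv_mul_le_one (a := ‖x‖)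
  · rw [NormedSpace.normalize, real_inner_smul_left]
    positivity
  · rw [← real_inner_smul_left, NormedSpace.norm_smul_normalize, abs_of_nonneg hxy]

theorem norm_mul_inner_le {w : ℝ} (hw : 0 ≤ w) {x : H} (hx : ‖x‖ ≤ 1) (y : H) :
    ‖w * ⟪x, y⟫‖ ≤ w * ‖y‖ := by
  rw [norm_mul, Real.norm_of_nonneg hw]
  gcongr
  exact (norm_inner_le_norm x y).trans (mul_le_of_le_one_left (norm_nonneg y) hx)

theorem summable_mul_inner (hω : ∀ i, 0 ≤ ω i) (hωs : Summable ω) {x : ι → H}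
    (hx : ∀ i, ‖x i‖ ≤ 1) (y : H) : Summable fun i => ω i * ⟪x i, y⟫ :=
  Summable.of_norm_bounded (hωs.mul_right ‖y‖) fun i => norm_mul_inner_le (hω i) (hx i) y

theorem tsum_mul_inner_le (hω : ∀ i, 0 ≤ ω i) (hωs : Summable ω) {x : ι → H}
    (hx : ∀ i, ‖x i‖ ≤ 1) (y : H) : ∑' i, ω i * ⟪x i, y⟫ ≤ (∑' i, ω i) * ‖y‖ :=
  (le_abs_self _).trans <| tsum_of_norm_bounded (hωs.hasSum.mul_right ‖y‖) fun i =>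
    norm_mul_inner_le (hω i) (hx i) y

theorem exists_sq_tsum_mul_inner_le (hω : ∀ i, 0 ≤ ω i) (hωs : Summable ω)
    {K : ι → Submodule ℝ H} {x : ι → H} (hxK : ∀ i, x i ∈ K i)
    (hxs : Summable fun i => ω i * ‖x i‖ ^ 2) {y : H} (hy : ‖y‖ ≤ 1) :
    ∃ u : ι → H, (∀ i, u i ∈ K i) ∧ (∀ i, ‖u i‖ ≤ 1) ∧
      (∑' i, ω i * ⟪x i, y⟫) ^ 2 ≤ (∑' i, ω i * ‖x i‖ ^ 2) * ∑' i, ω i * ⟪u i, y⟫ := by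
  choose u huK hu hu_nonneg hxu using fun i => exists_mem_norm_le_one_abs_inner_eq (hxK i) y
  refine ⟨u, huK, hu, tsum_sq_le_tsum_mul_tsum_of_sq_le_mul
    (fun i => mul_nonneg (hω i) (sq_nonneg _)) (fun i => mul_nonneg (hω i) (hu_nonneg i))
    hxs (summable_mul_inner hω hωs hu y) fun i => ?_⟩
  have inner_le_one : ⟪u i, y⟫ ≤ 1 :=
    (real_inner_le_norm _ _).trans (mul_le_one₀ (hu i) (norm_nonneg y) hy)
  calc (ω i * ⟪x i, y⟫) ^ 2 = ω i ^ 2 * ‖x i‖ ^ 2 * ⟪u i, y⟫ ^ 2 := by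
        rw [mul_pow, ← sq_abs ⟪x i, y⟫, hxu i]; ring
    _ ≤ ω i ^ 2 * ‖x i‖ ^ 2 * ⟪u i, y⟫ := by
        gcongr
        exact pow_le_of_le_one (hu_nonneg i) inner_le_one two_ne_zero
    _ = ω i * ‖x i‖ ^ 2 * (ω i * ⟪u i, y⟫) := by ring

end WeightedInner

section Constants

variable {H : Type*} [NormedAddCommGroup H] [InnerProductSpace ℝ H] {ι : Type*} {ω : ι → ℝ}
  {M : ι → Submodule ℝ H} {x : ι → H} {y : H}

theorem configConst_nonneg : 0 ≤ configConst ω M :=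
  Real.sSup_nonneg' ⟨0, ⟨0, 0, by simp⟩, le_rfl⟩

theorem friedrichsCos_nonneg : 0 ≤ friedrichsCos ω M :=
  Real.sSup_nonneg' ⟨0, ⟨0, 0, by simp [summable_zero]⟩, le_rfl⟩

theorem tsum_mul_inner_le_configConst (hω : ∀ i, 0 ≤ ω i) (hωs : Summable ω)
    (hxM : ∀ i, x i ∈ M i ⊓ (⨅ j, M j)ᗮ) (hx : ∀ i, ‖x i‖ ≤ 1)
    (hyM : y ∈ (⨅ j, M j)ᗮ) (hy : ‖y‖ ≤ 1) :
    ∑' i, ω i * ⟪x i, y⟫ ≤ configConst ω M := by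
  refine le_csSup ⟨∑' i, ω i, ?_⟩ ⟨x, y, hxM, hx, hyM, hy, rfl⟩
  rintro _ ⟨x', y', -, hx', -, hy', rfl⟩
  exact (tsum_mul_inner_le hω hωs hx' y').trans (mul_le_of_le_one_right (tsum_nonneg hω) hy')

theorem sq_tsum_mul_inner_le_configConst (hω : ∀ i, 0 ≤ ω i) (hωs : Summable ω)
    (hxM : ∀ i, x i ∈ M i ⊓ (⨅ j, M j)ᗮ) (hxs : Summable fun i => ω i * ‖x i‖ ^ 2)
    (hx : ∑' i, ω i * ‖x i‖ ^ 2 ≤ 1) (hyM : y ∈ (⨅ j, M j)ᗮ) (hy : ‖y‖ ≤ 1) :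
    (∑' i, ω i * ⟪x i, y⟫) ^ 2 ≤ configConst ω M := by
  obtain ⟨u, huM, hu, hxu⟩ := exists_sq_tsum_mul_inner_le hω hωs hxM hxs hy
  calc (∑' i, ω i * ⟪x i, y⟫) ^ 2
      ≤ (∑' i, ω i * ‖x i‖ ^ 2) * ∑' i, ω i * ⟪u i, y⟫ := hxu
    _ ≤ (∑' i, ω i * ‖x i‖ ^ 2) * configConst ω M := by
        gcongr
        · exact tsum_nonneg fun i => mul_nonneg (hω i) (sq_nonneg _)
        · exact tsum_mul_inner_le_configConst hω hωs huM hu hyM hy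
    _ ≤ configConst ω M := mul_le_of_le_one_left configConst_nonneg hx

theorem friedrichsCos_sq_le_configConst (hω : ∀ i, 0 ≤ ω i) (hωs : Summable ω) :
    friedrichsCos ω M ^ 2 ≤ configConst ω M := by
  rw [← Real.le_sqrt friedrichsCos_nonneg configConst_nonneg]
  refine Real.sSup_le ?_ (Real.sqrt_nonneg _)
  rintro _ ⟨x, y, hxM, hxs, hx, hyM, hy, rfl⟩
  exact Real.le_sqrt_of_sq_le (sq_tsum_mul_inner_le_configConst hω hωs hxM hxs hx hyM hy)

theorem tsum_mul_inner_le_friedrichsCos (hω : ∀ i, 0 ≤ ω i) (hωs : Summable ω)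
    (hxM : ∀ i, x i ∈ M i ⊓ (⨅ j, M j)ᗮ) (hxs : Summable fun i => ω i * ‖x i‖ ^ 2)
    (hx : ∑' i, ω i * ‖x i‖ ^ 2 ≤ 1) (hyM : y ∈ (⨅ j, M j)ᗮ) (hy : ‖y‖ ≤ 1) :
    ∑' i, ω i * ⟪x i, y⟫ ≤ friedrichsCos ω M := by
  refine le_csSup ⟨√(configConst ω M), ?_⟩ ⟨x, y, hxM, hxs, hx, hyM, hy, rfl⟩
  rintro _ ⟨x', y', hxM', hxs', hx', hyM', hy', rfl⟩
  exact Real.le_sqrt_of_sq_le (sq_tsum_mul_inner_le_configConst hω hωs hxM' hxs' hx' hyM' hy')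

theorem configConst_le_friedrichsCos (hω : ∀ i, 0 ≤ ω i) (hωs : Summable ω)
    (hω_le_one : ∑' i, ω i ≤ 1) : configConst ω M ≤ friedrichsCos ω M := by
  refine Real.sSup_le ?_ friedrichsCos_nonneg
  rintro _ ⟨x, y, hxM, hx, hyM, hy, rfl⟩
  have hle : ∀ i, ω i * ‖x i‖ ^ 2 ≤ ω i := fun i =>
    mul_le_of_le_one_right (hω i) (pow_le_one₀ (norm_nonneg _) (hx i))
  have hxs : Summable fun i => ω i * ‖x i‖ ^ 2 :=
    hωs.of_nonneg_of_le (fun i => mul_nonneg (hω i) (sq_nonneg _)) hle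
  exact tsum_mul_inner_le_friedrichsCos hω hωs hxM hxs
    ((hxs.tsum_le_tsum hle hωs).trans hω_le_one) hyM hy

end Constants

theorem stmt_6_general {H : Type*} [NormedAddCommGroup H] [InnerProductSpace ℝ H] {ι : Type*}
    (ω : ι → ℝ) (hω : ∀ i, 0 ≤ ω i) (hωs : Summable ω) (hω_le_one : ∑' i, ω i ≤ 1)
    (M : ι → Submodule ℝ H) :
    friedrichsCos ω M ^ 2 ≤ configConst ω M ∧ configConst ω M ≤ friedrichsCos ω M :=
  ⟨friedrichsCos_sq_le_configConst hω hωs, configConst_le_friedrichsCos hω hωs hω_le_one⟩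

/-- `c_ω² ≤ κ_ω ≤ c_ω`. -/
theorem stmt_6 {H : Type*} [NormedAddCommGroup H] [InnerProductSpace ℝ H] [CompleteSpace H]
    {ι : Type*} [Countable ι] [Nonempty ι]
    (ω : ι → ℝ) (hω : ∀ i, 0 < ω i) (hωsum : HasSum ω 1)
    (M : ι → Submodule ℝ H) [∀ i, CompleteSpace (M i)]
    (hMnt : ∀ i, M i ≠ ⊥) :
    friedrichsCos ω M ^ 2 ≤ configConst ω M ∧ configConst ω M ≤ friedrichsCos ω M :=
  stmt_6_general ω (fun i => (hω i).le) hωsum.summable hωsum.tsum_eq.le M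
end

section
/- Let the index set be ι = {1, 2, 3, …}. For each integer q ≥ 2 set s_q := ∑_{i=1}^q ω i, N_q := ⋂_{i=1}^q Mᵢ, and let c_q := sSup { ∑_{i=1}^q (ω i / s_q) ⟪xᵢ, y⟫ : xᵢ ∈ Mᵢ ∩ N_q^⊥ for i = 1,…,q, ∑_{i=1}^q (ω i / s_q) ‖xᵢ‖² ≤ 1, y ∈ N_q^⊥, ‖y‖ ≤ 1 } and κ_q := sSup { ∑_{i=1}^q (ω i / s_q) ⟪xᵢ, y⟫ : xᵢ ∈ Mᵢ ∩ N_q^⊥ and ‖xᵢ‖ ≤ 1 for i = 1,…,q, y ∈ N_q^⊥, ‖y‖ ≤ 1 }. Then c_q → c_ω and κ_q → κ_ω as q → ∞; moreover the sequences (s_q · c_q) and (s_q · κ_q) are nondecreasing. -/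
open RealInnerProductSpace

/-!
For `y ∈ (⨅ i, M i)ᗮ` the optimal competitors `x i` are proportional to the projections
`P i y` of `y` onto `M i`, which again lie in `(⨅ i, M i)ᗮ`. Hence
`κ_ω = sup_y ∑ ω i ‖P i y‖` and `c_ω ^ 2 = sup_y ∑ ω i ‖P i y‖ ^ 2`, both suprema being over the
unit ball of `(⨅ i, M i)ᗮ`. In this form a larger family has a larger ball and a larger sum, which
gives monotonicity. As finite subfamilies `S` exhaust the index set, the projections of `y` onto
`(⨅ i ∈ S, M i)ᗮ` tend to `y`, and dominated convergence for series gives the limits.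
-/

open Filter Topology

section WeightedSums

variable {ι : Type*} {w a b : ι → ℝ}

theorem summable_and_tsum_weighted_mul_le_sqrt_mul_sqrt (hw : ∀ i, 0 ≤ w i) (ha : ∀ i, 0 ≤ a i)
    (hb : ∀ i, 0 ≤ b i) (hwa : Summable fun i => w i * a i ^ 2)
    (hwb : Summable fun i => w i * b i ^ 2) :
    (Summable fun i => w i * (a i * b i)) ∧
      ∑' i, w i * (a i * b i) ≤ √(∑' i, w i * a i ^ 2) * √(∑' i, w i * b i ^ 2) := by
  have sq_eq (u : ι → ℝ) (i : ι) : (√(w i) * u i) ^ (2 : ℝ) = w i * u i ^ 2 := by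
    rw [Real.rpow_two, mul_pow, Real.sq_sqrt (hw i)]
  have mul_eq (i : ι) : √(w i) * a i * (√(w i) * b i) = w i * (a i * b i) := by
    rw [mul_mul_mul_comm, Real.mul_self_sqrt (hw i)]
  have holder := Real.summable_and_inner_le_Lp_mul_Lq_tsum_of_nonneg Real.HolderConjugate.two_two
    (fun i => mul_nonneg (Real.sqrt_nonneg (w i)) (ha i))
    (fun i => mul_nonneg (Real.sqrt_nonneg (w i)) (hb i))
    (by simpa only [sq_eq] using hwa) (by simpa only [sq_eq] using hwb)
  simpa only [sq_eq, mul_eq, ← Real.sqrt_eq_rpow] using holder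

theorem tendsto_tsum_subtype_of_dominated {bound : ι → ℝ} {f : Finset ι → ι → ℝ} {g : ι → ℝ}
    (hbound : Summable bound) (hlim : ∀ i, Tendsto (f · i) atTop (𝓝 (g i)))
    (hle : ∀ S i, ‖f S i‖ ≤ bound i) :
    Tendsto (fun S : Finset ι => ∑' i : S, f S i) atTop (𝓝 (∑' i, g i)) := by
  have tsum_eq (S : Finset ι) : ∑' i : S, f S i = ∑' i, (S : Set ι).indicator (f S) i :=
    tsum_subtype (S : Set ι) (f S)
  simp only [tsum_eq]
  refine tendsto_tsum_of_dominated_convergence hbound (fun i => (hlim i).congr' ?_)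
    (.of_forall fun S i => (norm_indicator_le_norm_self (f S) i).trans (hle S i))
  filter_upwards [eventually_ge_atTop {i}] with S hS
  exact (Set.indicator_of_mem (Finset.singleton_subset_iff.mp hS) (f S)).symm

end WeightedSums

section Projections

variable {H : Type*} [NormedAddCommGroup H] [InnerProductSpace ℝ H] {ι : Type*}
  {M : ι → Submodule ℝ H} [∀ i, (M i).HasOrthogonalProjection] {y : H}

theorem starProjection_mem_orthogonal_iInf (hy : y ∈ (⨅ j, M j)ᗮ) (i : ι) :
    (M i).starProjection y ∈ (⨅ j, M j)ᗮ := by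
  intro z hz
  have hzi : z ∈ M i := iInf_le M i hz
  rw [← Submodule.inner_starProjection_left_eq_right, Submodule.starProjection_eq_self_iff.mpr hzi]
  exact hy z hz

theorem tendsto_starProjection_orthogonal_iInf_finset [CompleteSpace H] (hy : y ∈ (⨅ j, M j)ᗮ) :
    Tendsto (fun S : Finset ι => (⨅ i : S, M i)ᗮ.starProjection y) atTop (𝓝 y) := by
  have mono : Monotone fun S : Finset ι => (⨅ i : S, M i)ᗮ := fun S T hST =>
    Submodule.orthogonal_le (le_iInf fun i => iInf_le (fun j : T => M j) ⟨i, hST i.2⟩)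
  have orthogonal_le (i : ι) : (M i)ᗮ ≤ ⨆ S : Finset ι, (⨅ j : S, M j)ᗮ :=
    (Submodule.orthogonal_le (iInf_le (fun j : ({i} : Finset ι) => M j)
      ⟨i, Finset.mem_singleton_self i⟩)).trans (le_iSup (fun S : Finset ι => (⨅ j : S, M j)ᗮ) {i})
  have orthogonal_iInf_eq : (⨅ j, M j)ᗮ = (⨆ j, (M j)ᗮ).topologicalClosure := by
    simp only [← Submodule.orthogonal_orthogonal_eq_closure, ← Submodule.iInf_orthogonal,
      Submodule.orthogonal_orthogonal]
  have y_mem : y ∈ (⨆ S : Finset ι, (⨅ i : S, M i)ᗮ).topologicalClosure :=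
    Submodule.topologicalClosure_mono (iSup_le orthogonal_le) (orthogonal_iInf_eq ▸ hy)
  simpa only [Submodule.starProjection_eq_self_iff.mpr y_mem] using
    Submodule.starProjection_tendsto_closure_iSup _ mono y

end Projections

section ProjMoment

variable {H : Type*} [NormedAddCommGroup H] [InnerProductSpace ℝ H] {ι : Type*}

/-- The weighted `p`-th moment of the lengths of the projections of `y` onto the `M i`. -/
noncomputable def projMoment (p : ℕ) (ω : ι → ℝ) (M : ι → Submodule ℝ H)
    [∀ i, (M i).HasOrthogonalProjection] (y : H) : ℝ :=
  ∑' i, ω i * ‖(M i).starProjection y‖ ^ p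

/-- The largest `p`-th projection moment over the unit ball of `(⨅ i, M i)ᗮ`. For `p = 1` this is
the configuration constant, for `p = 2` the square of the Friedrichs cosine. -/
noncomputable def supProjMoment (p : ℕ) (ω : ι → ℝ) (M : ι → Submodule ℝ H)
    [∀ i, (M i).HasOrthogonalProjection] : ℝ :=
  ⨆ y : {y : H // y ∈ (⨅ i, M i)ᗮ ∧ ‖y‖ ≤ 1}, projMoment p ω M y

variable {p : ℕ} {ω : ι → ℝ} {M : ι → Submodule ℝ H} [∀ i, (M i).HasOrthogonalProjection] {y : H}

theorem projMoment_nonneg (hω : ∀ i, 0 ≤ ω i) : 0 ≤ projMoment p ω M y :=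
  tsum_nonneg fun i => mul_nonneg (hω i) (by positivity)

theorem weighted_norm_starProjection_pow_le (hω : ∀ i, 0 ≤ ω i) (hy : ‖y‖ ≤ 1) (i : ι) :
    ω i * ‖(M i).starProjection y‖ ^ p ≤ ω i :=
  mul_le_of_le_one_right (hω i) <| pow_le_one₀ (norm_nonneg _) <|
    (Submodule.norm_starProjection_apply_le _ y).trans hy

theorem summable_weighted_norm_starProjection_pow (hω : ∀ i, 0 ≤ ω i) (hsum : Summable ω)
    (hy : ‖y‖ ≤ 1) : Summable fun i => ω i * ‖(M i).starProjection y‖ ^ p :=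
  hsum.of_nonneg_of_le (fun i => mul_nonneg (hω i) (by positivity))
    (weighted_norm_starProjection_pow_le hω hy)

theorem projMoment_le_tsum (hω : ∀ i, 0 ≤ ω i) (hsum : Summable ω) (hy : ‖y‖ ≤ 1) :
    projMoment p ω M y ≤ ∑' i, ω i :=
  (summable_weighted_norm_starProjection_pow hω hsum hy).tsum_le_tsum
    (weighted_norm_starProjection_pow_le hω hy) hsum

theorem supProjMoment_nonneg (hω : ∀ i, 0 ≤ ω i) : 0 ≤ supProjMoment p ω M :=
  Real.iSup_nonneg fun _ => projMoment_nonneg hω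

theorem supProjMoment_le_tsum (hω : ∀ i, 0 ≤ ω i) (hsum : Summable ω) :
    supProjMoment p ω M ≤ ∑' i, ω i :=
  Real.iSup_le (fun y => projMoment_le_tsum hω hsum y.2.2) (tsum_nonneg hω)

theorem projMoment_le_supProjMoment (hω : ∀ i, 0 ≤ ω i) (hsum : Summable ω)
    (hy : y ∈ (⨅ i, M i)ᗮ) (hy1 : ‖y‖ ≤ 1) : projMoment p ω M y ≤ supProjMoment p ω M := by
  have bdd : BddAbove (Set.range fun z : {y : H // y ∈ (⨅ i, M i)ᗮ ∧ ‖y‖ ≤ 1} =>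
      projMoment p ω M z) :=
    ⟨∑' i, ω i, Set.forall_mem_range.mpr fun z => projMoment_le_tsum hω hsum z.2.2⟩
  exact le_ciSup bdd ⟨y, hy, hy1⟩

theorem supProjMoment_div {s : ℝ} (hs : 0 ≤ s) :
    supProjMoment p (fun i => ω i / s) M = supProjMoment p ω M / s := by
  simp only [supProjMoment, projMoment, div_eq_inv_mul,
    Real.mul_iSup_of_nonneg (inv_nonneg.mpr hs), mul_assoc, tsum_mul_left]

theorem supProjMoment_comp_le {κ : Type*} {f : κ → ι} (hf : f.Injective) (hω : ∀ i, 0 ≤ ω i)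
    (hsum : Summable ω) :
    supProjMoment p (fun k => ω (f k)) (fun k => M (f k)) ≤ supProjMoment p ω M := by
  refine Real.iSup_le (fun ⟨y, hy, hy1⟩ => ?_) (supProjMoment_nonneg hω)
  have y_mem : y ∈ (⨅ i, M i)ᗮ :=
    Submodule.orthogonal_le (le_iInf fun k => iInf_le M (f k)) hy
  calc projMoment p (fun k => ω (f k)) (fun k => M (f k)) y
      ≤ projMoment p ω M y :=
        tsum_comp_le_tsum_of_inj (summable_weighted_norm_starProjection_pow hω hsum hy1)
          (fun i => mul_nonneg (hω i) (by positivity)) hf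
    _ ≤ supProjMoment p ω M := projMoment_le_supProjMoment hω hsum y_mem hy1

theorem monotone_supProjMoment_finset (hω : ∀ i, 0 ≤ ω i) :
    Monotone fun S : Finset ι => supProjMoment p (fun i : S => ω i) (fun i : S => M i) :=
  fun S T hST => supProjMoment_comp_le (ω := fun i : T => ω i) (M := fun i : T => M i)
    (f := fun i : S => ⟨i, hST i.2⟩) (fun _ _ h => Subtype.ext (congrArg (fun i : T => (i : ι)) h))
    (fun i => hω i) .of_finite

theorem tendsto_projMoment_finset {z : Finset ι → H} (hω : ∀ i, 0 ≤ ω i) (hsum : Summable ω)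
    (hz : Tendsto z atTop (𝓝 y)) (hz1 : ∀ S, ‖z S‖ ≤ 1) :
    Tendsto (fun S : Finset ι => projMoment p (fun i : S => ω i) (fun i : S => M i) (z S)) atTop
      (𝓝 (projMoment p ω M y)) := by
  refine tendsto_tsum_subtype_of_dominated hsum
    (f := fun S i => ω i * ‖(M i).starProjection (z S)‖ ^ p) (fun i => ?_) fun S i => ?_
  · have continuous_term : Continuous fun v => ω i * ‖(M i).starProjection v‖ ^ p := by fun_prop
    exact (continuous_term.tendsto y).comp hz
  · rw [Real.norm_of_nonneg (mul_nonneg (hω i) (by positivity))]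
    exact weighted_norm_starProjection_pow_le hω (hz1 S) i

theorem tendsto_supProjMoment_finset [CompleteSpace H] (hω : ∀ i, 0 ≤ ω i) (hsum : Summable ω) :
    Tendsto (fun S : Finset ι => supProjMoment p (fun i : S => ω i) (fun i : S => M i)) atTop
      (𝓝 (supProjMoment p ω M)) := by
  refine tendsto_atTop_isLUB (monotone_supProjMoment_finset hω) ⟨?_, fun C hC => ?_⟩
  · rintro _ ⟨S, rfl⟩
    exact supProjMoment_comp_le Subtype.val_injective hω hsum
  rw [mem_upperBounds, Set.forall_mem_range] at hC
  have C_nonneg : 0 ≤ C := (supProjMoment_nonneg fun i : (∅ : Finset ι) => hω i).trans (hC ∅)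
  refine Real.iSup_le (fun ⟨y, hy, hy1⟩ => ?_) C_nonneg
  have norm_proj_le (S : Finset ι) : ‖(⨅ i : S, M i)ᗮ.starProjection y‖ ≤ 1 :=
    (Submodule.norm_starProjection_apply_le _ y).trans hy1
  refine le_of_tendsto' (tendsto_projMoment_finset hω hsum
    (tendsto_starProjection_orthogonal_iInf_finset hy) norm_proj_le) fun S => ?_
  exact (projMoment_le_supProjMoment (fun i : S => hω i) .of_finite
    (Submodule.starProjection_apply_mem _ y) (norm_proj_le S)).trans (hC S)

end ProjMoment

section Representation

variable {H : Type*} [NormedAddCommGroup H] [InnerProductSpace ℝ H] {ι : Type*}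
  {ω : ι → ℝ} {M : ι → Submodule ℝ H} [∀ i, (M i).HasOrthogonalProjection] {y : H}

theorem inner_starProjection_eq_of_mem {K : Submodule ℝ H} [K.HasOrthogonalProjection]
    {x : H} (hx : x ∈ K) (y : H) : ⟪x, K.starProjection y⟫ = ⟪x, y⟫ := by
  rw [← Submodule.inner_starProjection_left_eq_right, Submodule.starProjection_eq_self_iff.mpr hx]

theorem abs_inner_le_norm_mul_norm_starProjection {K : Submodule ℝ H} [K.HasOrthogonalProjection]
    {x : H} (hx : x ∈ K) (y : H) : |⟪x, y⟫| ≤ ‖x‖ * ‖K.starProjection y‖ := by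
  rw [← inner_starProjection_eq_of_mem hx]
  exact abs_real_inner_le_norm _ _

theorem inner_starProjection_self {K : Submodule ℝ H} [K.HasOrthogonalProjection] (y : H) :
    ⟪K.starProjection y, y⟫ = ‖K.starProjection y‖ ^ 2 := by
  rw [← inner_starProjection_eq_of_mem (K.starProjection_apply_mem y), real_inner_self_eq_norm_sq]

theorem tsum_weighted_inner_le {b : ι → ℝ} {x : ι → H} (hω : ∀ i, 0 ≤ ω i)
    (hb : Summable fun i => ω i * b i) (hxb : ∀ i, |⟪x i, y⟫| ≤ b i) :
    ∑' i, ω i * ⟪x i, y⟫ ≤ ∑' i, ω i * b i := by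
  have abs_le (i : ι) : |ω i * ⟪x i, y⟫| ≤ ω i * b i := by
    rw [abs_mul, abs_of_nonneg (hω i)]
    exact mul_le_mul_of_nonneg_left (hxb i) (hω i)
  exact (Summable.of_norm_bounded hb abs_le).tsum_le_tsum
    (fun i => (le_abs_self _).trans (abs_le i)) hb

theorem tsum_weighted_inner_le_sqrt_projMoment {x : ι → H} (hω : ∀ i, 0 ≤ ω i)
    (hsum : Summable ω) (hx : ∀ i, x i ∈ M i) (hxsum : Summable fun i => ω i * ‖x i‖ ^ 2)
    (hx1 : ∑' i, ω i * ‖x i‖ ^ 2 ≤ 1) (hy1 : ‖y‖ ≤ 1) :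
    ∑' i, ω i * ⟪x i, y⟫ ≤ √(projMoment 2 ω M y) := by
  obtain ⟨summable_mul, tsum_mul_le⟩ := summable_and_tsum_weighted_mul_le_sqrt_mul_sqrt hω
    (fun i => norm_nonneg (x i)) (fun i => norm_nonneg ((M i).starProjection y)) hxsum
    (summable_weighted_norm_starProjection_pow hω hsum hy1)
  calc ∑' i, ω i * ⟪x i, y⟫
      ≤ ∑' i, ω i * (‖x i‖ * ‖(M i).starProjection y‖) :=
        tsum_weighted_inner_le hω summable_mul fun i =>
          abs_inner_le_norm_mul_norm_starProjection (hx i) y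
    _ ≤ √(∑' i, ω i * ‖x i‖ ^ 2) * √(projMoment 2 ω M y) := tsum_mul_le
    _ ≤ √(projMoment 2 ω M y) :=
        mul_le_of_le_one_left (Real.sqrt_nonneg _) (Real.sqrt_le_one.mpr hx1)

theorem exists_tsum_weighted_inner_eq_sqrt_projMoment (hω : ∀ i, 0 ≤ ω i) (hsum : Summable ω)
    (hy : y ∈ (⨅ j, M j)ᗮ) (hy1 : ‖y‖ ≤ 1) :
    ∃ x : ι → H, (∀ i, x i ∈ M i ⊓ (⨅ j, M j)ᗮ) ∧ (Summable fun i => ω i * ‖x i‖ ^ 2) ∧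
      ∑' i, ω i * ‖x i‖ ^ 2 ≤ 1 ∧ √(projMoment 2 ω M y) = ∑' i, ω i * ⟪x i, y⟫ := by
  set E := projMoment 2 ω M y
  -- If `E = 0` then `(√E)⁻¹ = 0`, and the resulting `x = 0` is still optimal.
  let x (i : ι) : H := (√E)⁻¹ • (M i).starProjection y
  have norm_sq_x (i : ι) : ω i * ‖x i‖ ^ 2 = ω i * ‖(M i).starProjection y‖ ^ 2 / E := by
    rw [norm_smul, norm_inv, Real.norm_of_nonneg (Real.sqrt_nonneg E), mul_pow, inv_pow,
      Real.sq_sqrt (projMoment_nonneg hω)]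
    ring
  have inner_x (i : ι) : ω i * ⟪x i, y⟫ = ω i * ‖(M i).starProjection y‖ ^ 2 / √E := by
    rw [real_inner_smul_left, inner_starProjection_self]
    ring
  refine ⟨x, fun i => Submodule.smul_mem _ _ ⟨(M i).starProjection_apply_mem y,
    starProjection_mem_orthogonal_iInf hy i⟩, ?_, ?_, ?_⟩
  · simpa only [norm_sq_x] using
      (summable_weighted_norm_starProjection_pow hω hsum hy1).div_const E
  · simpa only [norm_sq_x, tsum_div_const] using! div_self_le_one E
  · simpa only [inner_x, tsum_div_const] using! Real.div_sqrt.symm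

theorem friedrichsCos_eq_sqrt_supProjMoment (hω : ∀ i, 0 ≤ ω i) (hsum : Summable ω) :
    friedrichsCos ω M = √(supProjMoment 2 ω M) := by
  have sqrt_mem {y : H} (hy : y ∈ (⨅ j, M j)ᗮ) (hy1 : ‖y‖ ≤ 1) :
      √(projMoment 2 ω M y) ∈ { r : ℝ | ∃ (x : ι → H) (y : H),
        (∀ i, x i ∈ M i ⊓ (⨅ j, M j)ᗮ) ∧
        (Summable fun i => ω i * ‖x i‖ ^ 2) ∧ (∑' i, ω i * ‖x i‖ ^ 2) ≤ 1 ∧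
        y ∈ (⨅ j, M j)ᗮ ∧ ‖y‖ ≤ 1 ∧ r = ∑' i, ω i * ⟪x i, y⟫ } := by
    obtain ⟨x, hx, hxsum, hx1, value_eq⟩ :=
      exists_tsum_weighted_inner_eq_sqrt_projMoment hω hsum hy hy1
    exact ⟨x, y, hx, hxsum, hx1, hy, hy1, value_eq⟩
  have zero_attained := sqrt_mem (Submodule.zero_mem _) (norm_zero.trans_le zero_le_one)
  refine IsLUB.csSup_eq ⟨?_, fun C hC => ?_⟩ ⟨_, zero_attained⟩
  · rintro _ ⟨x, y, hx, hxsum, hx1, hy, hy1, rfl⟩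
    exact (tsum_weighted_inner_le_sqrt_projMoment hω hsum (fun i => (hx i).1) hxsum hx1 hy1).trans
      (Real.sqrt_le_sqrt (projMoment_le_supProjMoment hω hsum hy hy1))
  · have C_nonneg : 0 ≤ C := (Real.sqrt_nonneg _).trans (hC zero_attained)
    refine Real.sqrt_le_iff.mpr ⟨C_nonneg, Real.iSup_le (fun ⟨y, hy, hy1⟩ => ?_) (sq_nonneg C)⟩
    exact (Real.sqrt_le_left C_nonneg).mp (hC (sqrt_mem hy hy1))

theorem tsum_weighted_inner_le_projMoment_one {x : ι → H} (hω : ∀ i, 0 ≤ ω i)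
    (hsum : Summable ω) (hx : ∀ i, x i ∈ M i) (hx1 : ∀ i, ‖x i‖ ≤ 1) (hy1 : ‖y‖ ≤ 1) :
    ∑' i, ω i * ⟪x i, y⟫ ≤ projMoment 1 ω M y := by
  refine tsum_weighted_inner_le hω (summable_weighted_norm_starProjection_pow hω hsum hy1)
    fun i => ?_
  rw [pow_one]
  exact (abs_inner_le_norm_mul_norm_starProjection (hx i) y).trans
    (mul_le_of_le_one_left (norm_nonneg _) (hx1 i))

theorem exists_tsum_weighted_inner_eq_projMoment_one (hy : y ∈ (⨅ j, M j)ᗮ) :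
    ∃ x : ι → H, (∀ i, x i ∈ M i ⊓ (⨅ j, M j)ᗮ) ∧ (∀ i, ‖x i‖ ≤ 1) ∧
      projMoment 1 ω M y = ∑' i, ω i * ⟪x i, y⟫ := by
  refine ⟨fun i => ‖(M i).starProjection y‖⁻¹ • (M i).starProjection y, fun i =>
    Submodule.smul_mem _ _ ⟨(M i).starProjection_apply_mem y,
      starProjection_mem_orthogonal_iInf hy i⟩, fun i => ?_, tsum_congr fun i => ?_⟩
  · rw [norm_smul, norm_inv, norm_norm]
    exact inv_mul_le_one
  · rw [real_inner_smul_left, inner_starProjection_self, pow_one, sq, ← mul_assoc (_ : ℝ)⁻¹,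
      inv_mul_mul_self]

theorem configConst_eq_supProjMoment_one (hω : ∀ i, 0 ≤ ω i) (hsum : Summable ω) :
    configConst ω M = supProjMoment 1 ω M := by
  have moment_mem {y : H} (hy : y ∈ (⨅ j, M j)ᗮ) (hy1 : ‖y‖ ≤ 1) :
      projMoment 1 ω M y ∈ { r : ℝ | ∃ (x : ι → H) (y : H),
        (∀ i, x i ∈ M i ⊓ (⨅ j, M j)ᗮ) ∧ (∀ i, ‖x i‖ ≤ 1) ∧
        y ∈ (⨅ j, M j)ᗮ ∧ ‖y‖ ≤ 1 ∧ r = ∑' i, ω i * ⟪x i, y⟫ } := by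
    obtain ⟨x, hx, hx1, value_eq⟩ := exists_tsum_weighted_inner_eq_projMoment_one (ω := ω) hy
    exact ⟨x, y, hx, hx1, hy, hy1, value_eq⟩
  have zero_attained := moment_mem (Submodule.zero_mem _) (norm_zero.trans_le zero_le_one)
  refine IsLUB.csSup_eq ⟨?_, fun C hC => ?_⟩ ⟨_, zero_attained⟩
  · rintro _ ⟨x, y, hx, hx1, hy, hy1, rfl⟩
    exact (tsum_weighted_inner_le_projMoment_one hω hsum (fun i => (hx i).1) hx1 hy1).trans
      (projMoment_le_supProjMoment hω hsum hy hy1)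
  · exact Real.iSup_le (fun ⟨_, hy, hy1⟩ => hC (moment_mem hy hy1))
      ((projMoment_nonneg hω).trans (hC zero_attained))

end Representation

section Truncation

variable {H : Type*} [NormedAddCommGroup H] [InnerProductSpace ℝ H] {ι : Type*}

/-- The Friedrichs cosine of the finite subfamily `(M i)_{i ∈ S}` for the weights renormalized to
total mass `1`; `S = Finset.range q` gives `c_q`. -/
noncomputable def truncFriedrichsCos (ω : ι → ℝ) (M : ι → Submodule ℝ H) (S : Finset ι) : ℝ :=
  friedrichsCos (fun i : S => ω i / ∑ j ∈ S, ω j) (fun i : S => M i)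

/-- The configuration constant of the finite subfamily `(M i)_{i ∈ S}` for the weights renormalized
to total mass `1`; `S = Finset.range q` gives `κ_q`. -/
noncomputable def truncConfigConst (ω : ι → ℝ) (M : ι → Submodule ℝ H) (S : Finset ι) : ℝ :=
  configConst (fun i : S => ω i / ∑ j ∈ S, ω j) (fun i : S => M i)

theorem truncFriedrichsCos_eq_sSup (ω : ι → ℝ) (M : ι → Submodule ℝ H) (S : Finset ι) :
    truncFriedrichsCos ω M S = sSup { r : ℝ | ∃ (x : ι → H) (y : H),
      (∀ i ∈ S, x i ∈ M i ⊓ (⨅ j ∈ S, M j)ᗮ) ∧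
      (∑ i ∈ S, ω i / (∑ j ∈ S, ω j) * ‖x i‖ ^ 2) ≤ 1 ∧
      y ∈ (⨅ j ∈ S, M j)ᗮ ∧ ‖y‖ ≤ 1 ∧
      r = ∑ i ∈ S, ω i / (∑ j ∈ S, ω j) * ⟪x i, y⟫ } := by
  simp only [truncFriedrichsCos, friedrichsCos,
    (Subtype.surjective_restrict (β := fun _ : ι => H) (· ∈ S)).exists, Subtype.restrict_apply,
    Subtype.forall, iInf_subtype, Summable.of_finite, true_and, tsum_fintype, ← S.sum_coe_sort]

theorem truncConfigConst_eq_sSup (ω : ι → ℝ) (M : ι → Submodule ℝ H) (S : Finset ι) :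
    truncConfigConst ω M S = sSup { r : ℝ | ∃ (x : ι → H) (y : H),
      (∀ i ∈ S, x i ∈ M i ⊓ (⨅ j ∈ S, M j)ᗮ) ∧ (∀ i ∈ S, ‖x i‖ ≤ 1) ∧
      y ∈ (⨅ j ∈ S, M j)ᗮ ∧ ‖y‖ ≤ 1 ∧
      r = ∑ i ∈ S, ω i / (∑ j ∈ S, ω j) * ⟪x i, y⟫ } := by
  simp only [truncConfigConst, configConst,
    (Subtype.surjective_restrict (β := fun _ : ι => H) (· ∈ S)).exists, Subtype.restrict_apply,
    Subtype.forall, iInf_subtype, tsum_fintype, ← S.sum_coe_sort]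

variable {ω : ι → ℝ} {M : ι → Submodule ℝ H} [∀ i, (M i).HasOrthogonalProjection]

theorem truncFriedrichsCos_eq_sqrt (hω : ∀ i, 0 ≤ ω i) (S : Finset ι) :
    truncFriedrichsCos ω M S =
      √(supProjMoment 2 (fun i : S => ω i) (fun i : S => M i) / ∑ i ∈ S, ω i) := by
  have s_nonneg : 0 ≤ ∑ i ∈ S, ω i := S.sum_nonneg fun i _ => hω i
  rw [truncFriedrichsCos, friedrichsCos_eq_sqrt_supProjMoment
    (fun i : S => div_nonneg (hω i) s_nonneg) .of_finite, supProjMoment_div s_nonneg]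

theorem truncConfigConst_eq_div (hω : ∀ i, 0 ≤ ω i) (S : Finset ι) :
    truncConfigConst ω M S =
      supProjMoment 1 (fun i : S => ω i) (fun i : S => M i) / ∑ i ∈ S, ω i := by
  have s_nonneg : 0 ≤ ∑ i ∈ S, ω i := S.sum_nonneg fun i _ => hω i
  rw [truncConfigConst, configConst_eq_supProjMoment_one
    (fun i : S => div_nonneg (hω i) s_nonneg) .of_finite, supProjMoment_div s_nonneg]

theorem tendsto_truncFriedrichsCos [CompleteSpace H] (hω : ∀ i, 0 ≤ ω i) (hsum : HasSum ω 1) :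
    Tendsto (truncFriedrichsCos ω M) atTop (𝓝 (friedrichsCos ω M)) := by
  rw [friedrichsCos_eq_sqrt_supProjMoment hω hsum.summable, funext (truncFriedrichsCos_eq_sqrt hω)]
  simpa only [div_one] using!
    ((tendsto_supProjMoment_finset hω hsum.summable).div hsum one_ne_zero).sqrt

theorem tendsto_truncConfigConst [CompleteSpace H] (hω : ∀ i, 0 ≤ ω i) (hsum : HasSum ω 1) :
    Tendsto (truncConfigConst ω M) atTop (𝓝 (configConst ω M)) := by
  rw [configConst_eq_supProjMoment_one hω hsum.summable, funext (truncConfigConst_eq_div hω)]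
  simpa only [div_one] using!
    (tendsto_supProjMoment_finset hω hsum.summable).div hsum one_ne_zero

theorem monotone_sum_mul_truncFriedrichsCos (hω : ∀ i, 0 ≤ ω i) :
    Monotone fun S => (∑ i ∈ S, ω i) * truncFriedrichsCos ω M S := by
  have s_mono : Monotone fun S : Finset ι => ∑ i ∈ S, ω i := fun _ _ hST =>
    Finset.sum_le_sum_of_subset_of_nonneg hST fun i _ _ => hω i
  have mul_eq (S : Finset ι) : (∑ i ∈ S, ω i) * truncFriedrichsCos ω M S =
      √(∑ i ∈ S, ω i) * √(supProjMoment 2 (fun i : S => ω i) (fun i : S => M i)) := by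
    rw [truncFriedrichsCos_eq_sqrt hω, Real.sqrt_div (supProjMoment_nonneg fun i : S => hω i),
      mul_div_left_comm, Real.div_sqrt, mul_comm]
  simp only [mul_eq]
  exact fun S T hST => mul_le_mul (Real.sqrt_le_sqrt (s_mono hST))
    (Real.sqrt_le_sqrt (monotone_supProjMoment_finset hω hST))
    (Real.sqrt_nonneg _) (Real.sqrt_nonneg _)

theorem monotone_sum_mul_truncConfigConst (hω : ∀ i, 0 ≤ ω i) :
    Monotone fun S => (∑ i ∈ S, ω i) * truncConfigConst ω M S := by
  have moment_le (S : Finset ι) :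
      supProjMoment 1 (fun i : S => ω i) (fun i : S => M i) ≤ ∑ i ∈ S, ω i := by
    simpa only [tsum_fintype, Finset.sum_coe_sort] using
      supProjMoment_le_tsum (p := 1) (ω := fun i : S => ω i) (M := fun i : S => M i)
        (fun i => hω i) .of_finite
  have mul_eq (S : Finset ι) : (∑ i ∈ S, ω i) * truncConfigConst ω M S =
      supProjMoment 1 (fun i : S => ω i) (fun i : S => M i) := by
    rw [truncConfigConst_eq_div hω]
    exact mul_div_cancel_of_imp' fun s_eq_zero =>
      le_antisymm (s_eq_zero ▸ moment_le S) (supProjMoment_nonneg fun i : S => hω i)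
  simpa only [mul_eq] using monotone_supProjMoment_finset hω

theorem stmt_9_general [CompleteSpace H] (ω : ι → ℝ) (hω : ∀ i, 0 ≤ ω i) (hωsum : HasSum ω 1)
    (M : ι → Submodule ℝ H) [∀ i, (M i).HasOrthogonalProjection] :
    Tendsto (truncFriedrichsCos ω M) atTop (𝓝 (friedrichsCos ω M)) ∧
    Tendsto (truncConfigConst ω M) atTop (𝓝 (configConst ω M)) ∧
    Monotone (fun S => (∑ i ∈ S, ω i) * truncFriedrichsCos ω M S) ∧
    Monotone (fun S => (∑ i ∈ S, ω i) * truncConfigConst ω M S) :=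
  ⟨tendsto_truncFriedrichsCos hω hωsum, tendsto_truncConfigConst hω hωsum,
    monotone_sum_mul_truncFriedrichsCos hω, monotone_sum_mul_truncConfigConst hω⟩

end Truncation

/-- Approximation, countably infinite case: the truncated Friedrichs
cosines `c_q` (with renormalized weights `ω i / s_q`, subspaces `M_0, …, M_{q-1}` and
intersection `N_q`) converge to `c_ω`, the truncated configuration constants `κ_q`
converge to `κ_ω`, and the sequences `s_q · c_q` and `s_q · κ_q` are nondecreasing. -/
theorem stmt_9 {H : Type*} [NormedAddCommGroup H] [InnerProductSpace ℝ H] [CompleteSpace H]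
    (ω : ℕ → ℝ) (hω : ∀ i, 0 < ω i) (hωsum : HasSum ω 1)
    (M : ℕ → Submodule ℝ H) [∀ i, CompleteSpace (M i)]
    (hMnt : ∀ i, M i ≠ ⊥)
    (s : ℕ → ℝ) (hs : ∀ q, s q = ∑ i ∈ Finset.range q, ω i)
    (N : ℕ → Submodule ℝ H) (hN : ∀ q, N q = ⨅ i ∈ Finset.range q, M i)
    (c : ℕ → ℝ)
    (hc : ∀ q, 2 ≤ q → c q = sSup { r : ℝ | ∃ (x : ℕ → H) (y : H),
      (∀ i < q, x i ∈ M i ⊓ (N q)ᗮ) ∧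
      (∑ i ∈ Finset.range q, ω i / s q * ‖x i‖ ^ 2) ≤ 1 ∧
      y ∈ (N q)ᗮ ∧ ‖y‖ ≤ 1 ∧
      r = ∑ i ∈ Finset.range q, ω i / s q * ⟪x i, y⟫ })
    (kap : ℕ → ℝ)
    (hkap : ∀ q, 2 ≤ q → kap q = sSup { r : ℝ | ∃ (x : ℕ → H) (y : H),
      (∀ i < q, x i ∈ M i ⊓ (N q)ᗮ) ∧ (∀ i < q, ‖x i‖ ≤ 1) ∧
      y ∈ (N q)ᗮ ∧ ‖y‖ ≤ 1 ∧
      r = ∑ i ∈ Finset.range q, ω i / s q * ⟪x i, y⟫ }) :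
    Filter.Tendsto c Filter.atTop (nhds (friedrichsCos ω M)) ∧
    Filter.Tendsto kap Filter.atTop (nhds (configConst ω M)) ∧
    (∀ q, 2 ≤ q → s q * c q ≤ s (q + 1) * c (q + 1)) ∧
    (∀ q, 2 ≤ q → s q * kap q ≤ s (q + 1) * kap (q + 1)) := by
  have hc_eq (q : ℕ) (hq : 2 ≤ q) : c q = truncFriedrichsCos ω M (Finset.range q) := by
    simp only [hc q hq, truncFriedrichsCos_eq_sSup, hs, hN, Finset.mem_range]
  have hkap_eq (q : ℕ) (hq : 2 ≤ q) : kap q = truncConfigConst ω M (Finset.range q) := by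
    simp only [hkap q hq, truncConfigConst_eq_sSup, hs, hN, Finset.mem_range]
  obtain ⟨cos_tendsto, config_tendsto, cos_mono, config_mono⟩ :=
    stmt_9_general ω (fun i => (hω i).le) hωsum M
  have range_subset (q : ℕ) := Finset.range_subset_range.mpr q.le_succ
  refine ⟨(cos_tendsto.comp tendsto_finset_range).congr' ?_,
    (config_tendsto.comp tendsto_finset_range).congr' ?_, fun q hq => ?_, fun q hq => ?_⟩
  · filter_upwards [eventually_ge_atTop 2] with q hq using (hc_eq q hq).symm
  · filter_upwards [eventually_ge_atTop 2] with q hq using (hkap_eq q hq).symm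
  · rw [hc_eq q hq, hc_eq (q + 1) (by omega), hs, hs]
    exact cos_mono (range_subset q)
  · rw [hkap_eq q hq, hkap_eq (q + 1) (by omega), hs, hs]
    exact config_mono (range_subset q)
end

section
/- Assume ι has at least two elements and the subspaces Mᵢ are pairwise orthogonal, i.e. ⟪u, v⟫ = 0 whenever u ∈ Mᵢ, v ∈ Mⱼ and i ≠ j. Then the configuration constant satisfies κ_ω = √(∑ᵢ (ω i)²) and the Friedrichs cosine satisfies c_ω = √(sSup { ω i : i ∈ ι }). -/
open RealInnerProductSpace

/-! Pairwise orthogonality makes `⋂ᵢ Mᵢ` trivial and gives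
`‖∑_{i ∈ s} ωᵢ xᵢ‖² = ∑_{i ∈ s} ωᵢ² ‖xᵢ‖²`. With Cauchy–Schwarz this bounds `∑ᵢ ωᵢ ⟪xᵢ, y⟫` by
`√(∑ᵢ ωᵢ²)` when all `‖xᵢ‖ ≤ 1`, and by `√(supᵢ ωᵢ)` when `∑ᵢ ωᵢ ‖xᵢ‖² ≤ 1`. Conversely, taking `y`
in the direction of a finite sum `∑_{i ∈ s} ωᵢ xᵢ` attains its norm: unit vectors `xᵢ ∈ Mᵢ`,
`i ∈ s`, give `√(∑_{i ∈ s} ωᵢ²)`, and a single vector `xᵢ` of length `1 / √ωᵢ` gives `√ωᵢ`. -/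

section

variable {H : Type*} [NormedAddCommGroup H] [InnerProductSpace ℝ H] {ι : Type*}
  {ω : ι → ℝ} {M : ι → Submodule ℝ H} {x : ι → H}

theorem bddAbove_range_of_summable_sq (hω : Summable fun i => ω i ^ 2) :
    BddAbove (Set.range ω) :=
  ⟨√(∑' i, ω i ^ 2), Set.forall_mem_range.2 fun i =>
    Real.le_sqrt_of_sq_le (hω.le_tsum i fun _ _ => sq_nonneg _)⟩

theorem summable_sq_of_nonneg (hω : ∀ i, 0 ≤ ω i) (hsum : Summable ω) :
    Summable fun i => ω i ^ 2 := by
  refine (hsum.mul_left (∑' i, ω i)).of_nonneg_of_le (fun i => sq_nonneg _) fun i => ?_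
  rw [sq]
  exact mul_le_mul_of_nonneg_right (hsum.le_tsum i fun j _ => hω j) (hω i)

theorem sum_sq_mul_le_sSup_range (hω : ∀ i, 0 ≤ ω i) (hbdd : BddAbove (Set.range ω)) {a : ι → ℝ}
    (ha : ∀ i, 0 ≤ a i) (hsum : Summable fun i => ω i * a i) (hle : ∑' i, ω i * a i ≤ 1)
    (s : Finset ι) : ∑ i ∈ s, ω i ^ 2 * a i ≤ sSup (Set.range ω) := by
  have hnonneg (i : ι) : 0 ≤ ω i * a i := mul_nonneg (hω i) (ha i)
  have hsup : 0 ≤ sSup (Set.range ω) := Real.sSup_nonneg (Set.forall_mem_range.2 hω)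
  calc ∑ i ∈ s, ω i ^ 2 * a i
      = ∑ i ∈ s, ω i * (ω i * a i) := Finset.sum_congr rfl fun i _ => by ring
    _ ≤ ∑ i ∈ s, sSup (Set.range ω) * (ω i * a i) := Finset.sum_le_sum fun i _ =>
        mul_le_mul_of_nonneg_right (le_csSup hbdd ⟨i, rfl⟩) (hnonneg i)
    _ = sSup (Set.range ω) * ∑ i ∈ s, ω i * a i := (Finset.mul_sum ..).symm
    _ ≤ sSup (Set.range ω) := mul_le_of_le_one_right hsup
        ((hsum.sum_le_tsum s fun i _ => hnonneg i).trans hle)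

theorem iInf_eq_bot_of_pairwise_isOrtho [Nontrivial ι] (hM : Pairwise fun i j => M i ⟂ M j) :
    ⨅ i, M i = ⊥ := by
  obtain ⟨i, j, hij⟩ := exists_pair_ne ι
  exact eq_bot_iff.2 ((le_inf (iInf_le M i) (iInf_le M j)).trans (hM hij).disjoint.le_bot)

theorem exists_mem_norm_eq_one_of_ne_bot {E : Type*} [NormedAddCommGroup E] [NormedSpace ℝ E]
    {K : Submodule ℝ E} (hK : K ≠ ⊥) : ∃ e ∈ K, ‖e‖ = 1 := by
  obtain ⟨v, hv, hv0⟩ := K.exists_mem_ne_zero_of_ne_bot hK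
  exact ⟨‖v‖⁻¹ • v, K.smul_mem _ hv, norm_smul_inv_norm (𝕜 := ℝ) hv0⟩

theorem norm_sum_smul_sq_of_pairwise_isOrtho (hM : Pairwise fun i j => M i ⟂ M j)
    (hx : ∀ i, x i ∈ M i) (s : Finset ι) :
    ‖∑ i ∈ s, ω i • x i‖ ^ 2 = ∑ i ∈ s, ω i ^ 2 * ‖x i‖ ^ 2 := by
  simpa [norm_smul, mul_pow] using
    (OrthogonalFamily.of_pairwise hM).norm_sum (fun i => ω i • (⟨x i, hx i⟩ : M i)) s

theorem sum_mul_inner_eq_inner_sum_smul (s : Finset ι) (y : H) :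
    ∑ i ∈ s, ω i * ⟪x i, y⟫ = ⟪∑ i ∈ s, ω i • x i, y⟫ := by
  simp only [sum_inner, real_inner_smul_left]

theorem tsum_mul_inner_le_sqrt_mul_norm (hM : Pairwise fun i j => M i ⟂ M j)
    (hx : ∀ i, x i ∈ M i) {B : ℝ} (hB : ∀ s : Finset ι, ∑ i ∈ s, ω i ^ 2 * ‖x i‖ ^ 2 ≤ B) (y : H) :
    ∑' i, ω i * ⟪x i, y⟫ ≤ √B * ‖y‖ := by
  refine tsum_le_of_sum_le' (by positivity) fun s => ?_
  have hnorm : ‖∑ i ∈ s, ω i • x i‖ ≤ √B :=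
    Real.le_sqrt_of_sq_le ((norm_sum_smul_sq_of_pairwise_isOrtho hM hx s).trans_le (hB s))
  calc ∑ i ∈ s, ω i * ⟪x i, y⟫
      = ⟪∑ i ∈ s, ω i • x i, y⟫ := sum_mul_inner_eq_inner_sum_smul s y
    _ ≤ ‖∑ i ∈ s, ω i • x i‖ * ‖y‖ := real_inner_le_norm _ _
    _ ≤ √B * ‖y‖ := by gcongr

/-- The values `∑ᵢ ωᵢ ⟪xᵢ, y⟫` for `x` in a set `X` of families and `y` in the unit ball. When
`⋂ᵢ Mᵢ = 0`, both constants are suprema of such sets, for different `X`. -/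
def pairingValues (ω : ι → ℝ) (X : Set (ι → H)) : Set ℝ :=
  {r | ∃ x ∈ X, ∃ y, ‖y‖ ≤ 1 ∧ r = ∑' i, ω i * ⟪x i, y⟫}

theorem norm_sum_smul_mem_pairingValues {X : Set (ι → H)} (hx : x ∈ X) {s : Finset ι}
    (hxs : ∀ i ∉ s, x i = 0) : ‖∑ i ∈ s, ω i • x i‖ ∈ pairingValues ω X := by
  set z := ∑ i ∈ s, ω i • x i with hz
  -- This also covers `z = 0`, where `‖z‖⁻¹ = 0`.
  refine ⟨x, hx, ‖z‖⁻¹ • z, mem_closedBall_zero_iff.1 (inv_norm_smul_mem_unitClosedBall z), ?_⟩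
  have hoff : ∀ i ∉ s, ω i * ⟪x i, ‖z‖⁻¹ • z⟫ = 0 := fun i hi => by simp [hxs i hi]
  rw [tsum_eq_sum hoff, sum_mul_inner_eq_inner_sum_smul, ← hz, real_inner_smul_self_right,
    ← mul_assoc, inv_mul_mul_self]

/-- The unit ball of the `ℓ^∞` product of the `Mᵢ`, the set `X` of `pairingValues` for
`configConst`. -/
def linftyUnitBall (M : ι → Submodule ℝ H) : Set (ι → H) :=
  {x | ∀ i, x i ∈ M i ∧ ‖x i‖ ≤ 1}

/-- The unit ball of the `ω`-weighted `ℓ²` product of the `Mᵢ`, the set `X` of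
`pairingValues` for `friedrichsCos`. Summability is required explicitly because a
divergent `∑'` is `0`. -/
def weightedL2UnitBall (ω : ι → ℝ) (M : ι → Submodule ℝ H) : Set (ι → H) :=
  {x | (∀ i, x i ∈ M i) ∧ (Summable fun i => ω i * ‖x i‖ ^ 2) ∧ ∑' i, ω i * ‖x i‖ ^ 2 ≤ 1}

theorem configConst_eq_sSup_pairingValues (hM : ⨅ i, M i = ⊥) :
    configConst ω M = sSup (pairingValues ω (linftyUnitBall M)) := by
  simp [configConst, pairingValues, linftyUnitBall, hM, forall_and, and_assoc]

theorem friedrichsCos_eq_sSup_pairingValues (hM : ⨅ i, M i = ⊥) :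
    friedrichsCos ω M = sSup (pairingValues ω (weightedL2UnitBall ω M)) := by
  simp [friedrichsCos, pairingValues, weightedL2UnitBall, hM, and_assoc]

theorem isLUB_pairingValues_linftyUnitBall (hω : Summable fun i => ω i ^ 2) (hMnt : ∀ i, M i ≠ ⊥)
    (hM : Pairwise fun i j => M i ⟂ M j) :
    IsLUB (pairingValues ω (linftyUnitBall M)) √(∑' i, ω i ^ 2) := by
  classical
  constructor
  · rintro r ⟨x, hx, y, hy, rfl⟩
    have hB (s : Finset ι) : ∑ i ∈ s, ω i ^ 2 * ‖x i‖ ^ 2 ≤ ∑' i, ω i ^ 2 :=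
      calc ∑ i ∈ s, ω i ^ 2 * ‖x i‖ ^ 2
          ≤ ∑ i ∈ s, ω i ^ 2 := Finset.sum_le_sum fun i _ =>
            mul_le_of_le_one_right (sq_nonneg _) (pow_le_one₀ (norm_nonneg _) (hx i).2)
        _ ≤ ∑' i, ω i ^ 2 := hω.sum_le_tsum s fun i _ => sq_nonneg _
    exact (tsum_mul_inner_le_sqrt_mul_norm hM (fun i => (hx i).1) hB y).trans
      (mul_le_of_le_one_right (Real.sqrt_nonneg _) hy)
  · intro b hb
    choose e heM he using fun i => exists_mem_norm_eq_one_of_ne_bot (hMnt i)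
    have hnorm (s : Finset ι) : ‖∑ i ∈ s, ω i • e i‖ ≤ b := by
      let x : ι → H := fun i => if i ∈ s then e i else 0
      have hx : x ∈ linftyUnitBall M := fun i => by
        by_cases hi : i ∈ s <;> simp [x, hi, heM, he]
      have hsum : ∑ i ∈ s, ω i • x i = ∑ i ∈ s, ω i • e i :=
        Finset.sum_congr rfl fun i hi => by simp [x, hi]
      rw [← hsum]
      exact hb (norm_sum_smul_mem_pairingValues hx fun i hi => if_neg hi)
    refine Real.sqrt_le_iff.2 ⟨by simpa using hnorm ∅, hω.tsum_le_of_sum_le fun s => ?_⟩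
    calc ∑ i ∈ s, ω i ^ 2
        = ‖∑ i ∈ s, ω i • e i‖ ^ 2 := by simp [norm_sum_smul_sq_of_pairwise_isOrtho hM heM, he]
      _ ≤ b ^ 2 := by gcongr; exact hnorm s

theorem sqrt_mem_pairingValues_weightedL2UnitBall (hω : ∀ i, 0 ≤ ω i) {i : ι} (hMi : M i ≠ ⊥) :
    √(ω i) ∈ pairingValues ω (weightedL2UnitBall ω M) := by
  classical
  obtain ⟨e, heM, he⟩ := exists_mem_norm_eq_one_of_ne_bot hMi
  -- If `ω i = 0`, then `(√(ω i))⁻¹ = 0`, so `x = 0`.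
  let x : ι → H := Pi.single i ((√(ω i))⁻¹ • e)
  have hxi : x i = (√(ω i))⁻¹ • e := Pi.single_eq_same i _
  have hx_off {j : ι} (hj : j ≠ i) : x j = 0 := Pi.single_eq_of_ne hj _
  have hxM (j : ι) : x j ∈ M j := by
    rcases eq_or_ne j i with rfl | hj
    · exact hxi ▸ (M j).smul_mem _ heM
    · exact hx_off hj ▸ (M j).zero_mem
  have hxsum : HasSum (fun j => ω j * ‖x j‖ ^ 2) (ω i * ‖x i‖ ^ 2) :=
    hasSum_single i fun j hj => by simp [hx_off hj]
  have hxle : ω i * ‖x i‖ ^ 2 ≤ 1 := by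
    simpa [hxi, norm_smul, he, Real.sq_sqrt (hω i)] using mul_inv_le_one (a := ω i)
  have hnorm : ‖∑ j ∈ {i}, ω j • x j‖ = √(ω i) := by
    simp [hxi, norm_smul, he, abs_of_nonneg, hω i, ← div_eq_mul_inv]
  rw [← hnorm]
  refine norm_sum_smul_mem_pairingValues ?_ fun j hj => hx_off (Finset.notMem_singleton.1 hj)
  exact ⟨hxM, hxsum.summable, hxsum.tsum_eq.trans_le hxle⟩

theorem isLUB_pairingValues_weightedL2UnitBall [Nonempty ι] (hω : ∀ i, 0 ≤ ω i)
    (hbdd : BddAbove (Set.range ω)) (hMnt : ∀ i, M i ≠ ⊥) (hM : Pairwise fun i j => M i ⟂ M j) :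
    IsLUB (pairingValues ω (weightedL2UnitBall ω M)) √(sSup (Set.range ω)) := by
  constructor
  · rintro r ⟨x, ⟨hxM, hsum, hle⟩, y, hy, rfl⟩
    exact (tsum_mul_inner_le_sqrt_mul_norm hM hxM
      (sum_sq_mul_le_sSup_range hω hbdd (fun i => sq_nonneg _) hsum hle) y).trans
      (mul_le_of_le_one_right (Real.sqrt_nonneg _) hy)
  · intro b hb
    have hsqrt (i : ι) : √(ω i) ≤ b := hb (sqrt_mem_pairingValues_weightedL2UnitBall hω (hMnt i))
    have hb0 : 0 ≤ b := (Real.sqrt_nonneg _).trans (hsqrt (Classical.arbitrary ι))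
    exact (Real.sqrt_le_left hb0).2 (csSup_le (Set.range_nonempty ω)
      (Set.forall_mem_range.2 fun i => (Real.sqrt_le_left hb0).1 (hsqrt i)))

theorem stmt_10_general [Nontrivial ι] (hω : ∀ i, 0 ≤ ω i) (hωsq : Summable fun i => ω i ^ 2)
    (hMnt : ∀ i, M i ≠ ⊥) (hM : Pairwise fun i j => M i ⟂ M j) :
    configConst ω M = √(∑' i, ω i ^ 2) ∧ friedrichsCos ω M = √(sSup (Set.range ω)) := by
  have hbot := iInf_eq_bot_of_pairwise_isOrtho hM
  have hκ := isLUB_pairingValues_linftyUnitBall hωsq hMnt hM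
  have hc :=
    isLUB_pairingValues_weightedL2UnitBall hω (bddAbove_range_of_summable_sq hωsq) hMnt hM
  exact ⟨(configConst_eq_sSup_pairingValues hbot).trans (hκ.csSup_eq hκ.nonempty),
    (friedrichsCos_eq_sSup_pairingValues hbot).trans (hc.csSup_eq hc.nonempty)⟩

end

/-- If the subspaces `Mᵢ` are pairwise orthogonal (and there are at
least two of them), then `κ_ω = √(∑ᵢ ωᵢ²)` and `c_ω = √(sup_i ωᵢ)`. -/
theorem stmt_10 {H : Type*} [NormedAddCommGroup H] [InnerProductSpace ℝ H] [CompleteSpace H]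
    {ι : Type*} [Countable ι] [Nontrivial ι]
    (ω : ι → ℝ) (hω : ∀ i, 0 < ω i) (hωsum : HasSum ω 1)
    (M : ι → Submodule ℝ H) [∀ i, CompleteSpace (M i)]
    (hMnt : ∀ i, M i ≠ ⊥)
    (horth : ∀ i j, i ≠ j → ∀ u ∈ M i, ∀ v ∈ M j, ⟪u, v⟫ = 0) :
    configConst ω M = Real.sqrt (∑' i, ω i ^ 2) ∧
    friedrichsCos ω M = Real.sqrt (sSup (Set.range ω)) :=
  stmt_10_general (fun i => (hω i).le) (summable_sq_of_nonneg (fun i => (hω i).le) hωsum.summable)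
    hMnt fun i j hij => Submodule.isOrtho_iff_inner_eq.2 (horth i j hij)
end

section
/- The closure in H of the set A_ω = { ∑ᵢ ω i • xᵢ : x : ι → H with xᵢ ∈ Mᵢ^⊥ for all i and ∑ᵢ ω i ‖xᵢ‖² < ∞ } equals M^⊥, the orthogonal complement of M = ⋂ᵢ Mᵢ. -/
open RealInnerProductSpace

/-!
Finitely supported families can absorb the nonzero weights, so the weighted sums contain the
algebraic sum of the subspaces `Mᵢᗮ`; as limits of finite sums they also lie in its closure. The
closure is therefore that of `⨆ i, Mᵢᗮ`, which is the double orthogonal complement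
`(⨆ i, Mᵢᗮ)ᗮᗮ = (⨅ i, Mᵢᗮᗮ)ᗮ = (⨅ i, Mᵢ)ᗮ`.
-/

section WeightedSums

variable {𝕜 E ι : Type*} [NormedField 𝕜] [NormedAddCommGroup E] [NormedSpace 𝕜 E]

/-- The set `A_ω` attached to weights `ω` and subspaces `K i`: all sums `∑ᵢ ω i • x i` with
`x i ∈ K i` and `∑ᵢ ‖ω i‖ ‖x i‖² < ∞`. Convergence of the series is part of the definition, since
arbitrary weights do not guarantee it. -/
def weightedSums (ω : ι → 𝕜) (K : ι → Submodule 𝕜 E) : Set E :=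
  {y | ∃ x : ι → E, (∀ i, x i ∈ K i) ∧ (Summable fun i => ‖ω i‖ * ‖x i‖ ^ 2) ∧
    HasSum (fun i => ω i • x i) y}

theorem iSup_subset_weightedSums {ω : ι → 𝕜} (hω : ∀ i, ω i ≠ 0) (K : ι → Submodule 𝕜 E) :
    ((⨆ i, K i : Submodule 𝕜 E) : Set E) ⊆ weightedSums ω K := by
  intro y hy
  obtain ⟨f, hfK, rfl⟩ := (Submodule.mem_iSup_iff_exists_finsupp K y).1 hy
  refine ⟨fun i => (ω i)⁻¹ • f i, fun i => (K i).smul_mem _ (hfK i), ?_, ?_⟩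
  · refine summable_of_ne_finset_zero (s := f.support) fun i hi => ?_
    simp [Finsupp.notMem_support_iff.1 hi]
  · simp only [smul_inv_smul₀ (hω _)]
    exact hasSum_sum_of_ne_finset_zero fun i hi => Finsupp.notMem_support_iff.1 hi

theorem weightedSums_subset_topologicalClosure_iSup (ω : ι → 𝕜) (K : ι → Submodule 𝕜 E) :
    weightedSums ω K ⊆ (⨆ i, K i).topologicalClosure := by
  rintro y ⟨x, hxK, -, hsum⟩
  refine mem_closure_of_tendsto hsum (.of_forall fun s => ?_)
  exact Submodule.sum_mem _ fun i _ =>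
    Submodule.smul_mem _ _ (Submodule.mem_iSup_of_mem i (hxK i))

theorem closure_weightedSums {ω : ι → 𝕜} (hω : ∀ i, ω i ≠ 0) (K : ι → Submodule 𝕜 E) :
    closure (weightedSums ω K) = (⨆ i, K i).topologicalClosure :=
  Set.Subset.antisymm
    (closure_minimal (weightedSums_subset_topologicalClosure_iSup ω K)
      (Submodule.isClosed_topologicalClosure _))
    (closure_mono (iSup_subset_weightedSums hω K))

theorem summable_norm_smul_of_summable_norm_mul_sq {ω : ι → 𝕜} {x : ι → E}
    (hω : Summable fun i => ‖ω i‖) (hx : Summable fun i => ‖ω i‖ * ‖x i‖ ^ 2) :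
    Summable fun i => ‖ω i • x i‖ := by
  refine (hω.add hx).of_nonneg_of_le (fun i => norm_nonneg _) fun i => ?_
  calc ‖ω i • x i‖ = ‖ω i‖ * ‖x i‖ := norm_smul _ _
    _ ≤ ‖ω i‖ * (1 + ‖x i‖ ^ 2) := by
      gcongr
      nlinarith [sq_nonneg (‖x i‖ - 1)]
    _ = ‖ω i‖ + ‖ω i‖ * ‖x i‖ ^ 2 := by ring

theorem weightedSums_eq_setOf_tsum [CompleteSpace E] {ω : ι → 𝕜} (hω : Summable fun i => ‖ω i‖)
    (K : ι → Submodule 𝕜 E) :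
    weightedSums ω K = {y | ∃ x : ι → E, (∀ i, x i ∈ K i) ∧
      (Summable fun i => ‖ω i‖ * ‖x i‖ ^ 2) ∧ y = ∑' i, ω i • x i} := by
  ext y
  refine exists_congr fun x => and_congr_right fun _ => and_congr_right fun hx => ?_
  have hsum : Summable fun i => ω i • x i :=
    (summable_norm_smul_of_summable_norm_mul_sq hω hx).of_norm
  rw [hsum.hasSum_iff, eq_comm]

end WeightedSums

section Orthogonal

variable {𝕜 H ι : Type*} [RCLike 𝕜] [NormedAddCommGroup H] [InnerProductSpace 𝕜 H]
  [CompleteSpace H]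

theorem topologicalClosure_iSup_orthogonal (M : ι → Submodule 𝕜 H)
    [∀ i, (M i).HasOrthogonalProjection] :
    (⨆ i, (M i)ᗮ).topologicalClosure = (⨅ i, M i)ᗮ := by
  rw [← Submodule.orthogonal_orthogonal_eq_closure, ← Submodule.iInf_orthogonal]
  simp only [Submodule.orthogonal_orthogonal]

theorem stmt_12_general {ω : ι → 𝕜} (hω : ∀ i, ω i ≠ 0) (M : ι → Submodule 𝕜 H)
    [∀ i, (M i).HasOrthogonalProjection] :
    closure (weightedSums ω fun i => (M i)ᗮ) = ((⨅ i, M i)ᗮ : Submodule 𝕜 H) := by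
  rw [closure_weightedSums hω, topologicalClosure_iSup_orthogonal]

end Orthogonal

/-- The closure of
`A_ω = { ∑ᵢ ω i • xᵢ : xᵢ ∈ Mᵢ^⊥, ∑ᵢ ω i ‖xᵢ‖² < ∞ }` equals `M^⊥`. -/
theorem stmt_12 {H : Type*} [NormedAddCommGroup H] [InnerProductSpace ℝ H] [CompleteSpace H]
    {ι : Type*} [Countable ι] [Nonempty ι]
    (ω : ι → ℝ) (hω : ∀ i, 0 < ω i) (hωsum : HasSum ω 1)
    (M : ι → Submodule ℝ H) [∀ i, CompleteSpace (M i)]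
    (hMnt : ∀ i, M i ≠ ⊥) :
    closure { y : H | ∃ x : ι → H, (∀ i, x i ∈ (M i)ᗮ) ∧
        (Summable fun i => ω i * ‖x i‖ ^ 2) ∧ y = ∑' i, ω i • x i } =
      (((⨅ i, M i : Submodule ℝ H)ᗮ : Submodule ℝ H) : Set H) := by
  simpa only [weightedSums_eq_setOf_tsum hωsum.summable.norm, Real.norm_of_nonneg (hω _).le]
    using stmt_12_general (fun i => (hω i).ne') M
end

section
/- Assume ι has at least two elements, M ≠ {0}, and Mⱼ ≠ M for some j ∈ ι. Then there exists a family y : ι → H with yᵢ ∈ Mᵢ for all i and ∑ᵢ ω i ‖yᵢ‖² < ∞, such that the (absolutely convergent) series ∑ᵢ ω i • yᵢ lies in M^⊥, but yⱼ ∉ M^⊥ for some j ∈ ι. (Hence the inclusion of { y : yᵢ ∈ Mᵢ ∩ M^⊥ for all i } in { y : yᵢ ∈ Mᵢ for all i and ∑ᵢ ω i • yᵢ ∈ M^⊥ }, within the ω-weighted ℓ² sequences, is strict.) -/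
open RealInnerProductSpace

/-!
If `m ≠ 0` lies in every `Mᵢ`, then so does each of its multiples. Two or more scalars `ω i`
always satisfy a nontrivial finite linear relation `∑ᵢ cᵢ ω i = 0`, so the family `yᵢ = cᵢ • m` has
weighted sum `0`, while `yⱼ` is a nonzero vector of `M` as soon as `cⱼ ≠ 0`.
-/

theorem not_linearIndependent_of_nontrivial_index {R ι : Type*} [Semiring R]
    [StrongRankCondition R] [Nontrivial ι] (ω : ι → R) : ¬ LinearIndependent R ω := by
  have : Nontrivial R := nontrivial_of_invariantBasisNumber R
  intro hω
  have card_le_one := hω.cardinal_lift_le_rank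
  rw [Module.rank_self, Cardinal.lift_one, Cardinal.lift_le_one_iff,
    Cardinal.le_one_iff_subsingleton] at card_le_one
  exact not_subsingleton ι card_le_one

theorem tsum_smul_finsupp_smul {R E ι : Type*} [CommSemiring R] [AddCommMonoid E] [Module R E]
    [TopologicalSpace E] (ω : ι → R) (c : ι →₀ R) (m : E) :
    ∑' i, ω i • c i • m = Finsupp.linearCombination R ω c • m := by
  have vanish_off_support : ∀ i ∉ c.support, ω i • c i • m = 0 := fun i hi => by
    rw [Finsupp.notMem_support_iff.mp hi, zero_smul, smul_zero]
  rw [tsum_eq_sum vanish_off_support, Finsupp.linearCombination_apply, Finsupp.sum,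
    Finset.sum_smul]
  exact Finset.sum_congr rfl fun i _ => by rw [smul_smul, smul_eq_mul, mul_comm]

section Orthogonal

variable {𝕜 H : Type*} [RCLike 𝕜] [NormedAddCommGroup H] [InnerProductSpace 𝕜 H]

theorem notMem_orthogonal_of_mem_of_ne_zero {K : Submodule 𝕜 H} {x : H} (hx : x ∈ K)
    (hx0 : x ≠ 0) : x ∉ Kᗮ :=
  fun hx' => hx0 (Submodule.disjoint_def.mp K.orthogonal_disjoint x hx hx')

theorem stmt_13_general {ι : Type*} [Nontrivial ι] (ω : ι → 𝕜) (M : ι → Submodule 𝕜 H)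
    (hM : ⨅ i, M i ≠ ⊥) :
    ∃ y : ι → H, (∀ i, y i ∈ M i) ∧ y.HasFiniteSupport ∧ ∑' i, ω i • y i = 0 ∧
      ∃ j, y j ∉ (⨅ i, M i)ᗮ := by
  obtain ⟨m, hm, hm0⟩ := Submodule.exists_mem_ne_zero_of_ne_bot hM
  obtain ⟨c, hcω, hc0⟩ : ∃ c : ι →₀ 𝕜, Finsupp.linearCombination 𝕜 ω c = 0 ∧ c ≠ 0 := by
    simpa only [linearIndependent_iff, not_forall, exists_prop] using
      not_linearIndependent_of_nontrivial_index ω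
  obtain ⟨j, hj⟩ := Finsupp.ne_iff.mp hc0
  have smul_mem_iInf (i : ι) : c i • m ∈ ⨅ i, M i := Submodule.smul_mem _ _ hm
  refine ⟨fun i => c i • m, fun i => Submodule.mem_iInf M |>.mp (smul_mem_iInf i) i, ?_, ?_, j, ?_⟩
  · exact c.hasFiniteSupport.subset (Function.support_smul_subset_left c fun _ => m)
  · rw [tsum_smul_finsupp_smul, hcω, zero_smul]
  · exact notMem_orthogonal_of_mem_of_ne_zero (smul_mem_iInf j) (smul_ne_zero hj hm0)

end Orthogonal

/-- If `M ≠ {0}` and `Mⱼ ≠ M` for some `j`, then there is a family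
`y` with `yᵢ ∈ Mᵢ`, `∑ᵢ ω i ‖yᵢ‖² < ∞`, whose weighted average lies in `M^⊥`,
although some component `yⱼ` does not lie in `M^⊥`. -/
theorem stmt_13 {H : Type*} [NormedAddCommGroup H] [InnerProductSpace ℝ H] [CompleteSpace H]
    {ι : Type*} [Countable ι] [Nontrivial ι]
    (ω : ι → ℝ) (hω : ∀ i, 0 < ω i) (hωsum : HasSum ω 1)
    (M : ι → Submodule ℝ H) [∀ i, CompleteSpace (M i)]
    (hMnt : ∀ i, M i ≠ ⊥)
    (hM0 : (⨅ i, M i : Submodule ℝ H) ≠ ⊥)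
    (hj : ∃ j, M j ≠ ⨅ i, M i) :
    ∃ y : ι → H, (∀ i, y i ∈ M i) ∧
      (Summable fun i => ω i * ‖y i‖ ^ 2) ∧
      (∑' i, ω i • y i) ∈ (⨅ i, M i : Submodule ℝ H)ᗮ ∧
      ∃ j, y j ∉ (⨅ i, M i : Submodule ℝ H)ᗮ := by
  obtain ⟨y, hyM, hy_fin, hy_sum, hy_orth⟩ := stmt_13_general ω M hM0
  exact ⟨y, hyM, summable_of_hasFiniteSupport (hy_fin.subset fun i hi hyi => hi (by simp [hyi])),
    hy_sum ▸ Submodule.zero_mem _, hy_orth⟩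
end
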